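/- Let X and Y be finite nonempty types, let D be a probability mass function on X × Y with everywhere positive marginals D_X and D_Y, and suppose D is δ-hypercontractive for some 0 ≤ δ < 1. Let A ⊆ X and B ⊆ Y, and set μ = Σ_{x ∈ A} D_X(x) and ν = Σ_{y ∈ B} D_Y(y). Then Σ_{(x,y) ∈ A × B} D(x,y) ≤ μν + (μ^(2−δ)·(1−μ) + μ·(1−μ)^(2−δ))^(1/(2−δ)) · (ν^(2−δ)·(1−ν) + ν·(1−ν)^(2−δ))^(1/(2−δ)). -/

import Mathlib

open Finset

/-- Marginal distribution on `X` of a distribution on `X × Y`. -/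
noncomputable def margX {X Y : Type*} [Fintype Y] (D : X × Y → ℝ) (x : X) : ℝ :=
  ∑ y, D (x, y)

/-- Marginal distribution on `Y` of a distribution on `X × Y`. -/
noncomputable def margY {X Y : Type*} [Fintype X] (D : X × Y → ℝ) (y : Y) : ℝ :=
  ∑ x, D (x, y)

/-- The conditional-expectation operator `T_D`: `(T_D f)(x) = E[f(y) | x]`. -/
noncomputable def condOp {X Y : Type*} [Fintype Y] (D : X × Y → ℝ) (f : Y → ℝ) (x : X) : ℝ :=
  (∑ y, D (x, y) * f y) / margX D x

/-- The `L_p` norm of `f` with respect to the weight (probability mass) `w`. -/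
noncomputable def wnorm {α : Type*} [Fintype α] (w : α → ℝ) (p : ℝ) (f : α → ℝ) : ℝ :=
  (∑ a, w a * |f a| ^ p) ^ (1 / p)

/-- `D` is `δ`-hypercontractive: `‖T_D f‖_{2 + δ/(1-δ)} ≤ ‖f‖_{2-δ}` for all `f`. -/
def Hypercontractive {X Y : Type*} [Fintype X] [Fintype Y] (D : X × Y → ℝ) (δ : ℝ) : Prop :=
  ∀ f : Y → ℝ,
    wnorm (margX D) (2 + δ / (1 - δ)) (condOp D f) ≤ wnorm (margY D) (2 - δ) f

/-!
For `f = 1_A - μ` and `g = 1_B - ν`, the difference `D(A × B) - μν` is the correlation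
`E[f(x) g(y)] = E[f · T_D g]`. The exponents `2 - δ` and `2 + δ / (1 - δ)` are conjugate, so
Hölder's inequality followed by hypercontractivity bounds it by `‖f‖_{2-δ} ‖g‖_{2-δ}`; since `f`
takes only the values `1 - μ` and `-μ`, and `g` only `1 - ν` and `-ν`, these norms are explicit.
-/

section WeightedSums

variable {α : Type*} [Fintype α] {w : α → ℝ} {p q : ℝ}

/-- The mean of `f` with respect to the weight `w`; it is the expectation of `f` when `w` is a
probability mass function, but `w` is not required to be normalized. -/
def wmean (w f : α → ℝ) : ℝ :=
  ∑ a, w a * f a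

lemma wnorm_nonneg (hw : ∀ a, 0 ≤ w a) (f : α → ℝ) : 0 ≤ wnorm w p f :=
  Real.rpow_nonneg
    (sum_nonneg fun a _ ↦ mul_nonneg (hw a) (Real.rpow_nonneg (abs_nonneg (f a)) p)) _

lemma rpow_one_div_mul_abs_rpow {c : ℝ} (hc : 0 ≤ c) (hp : p ≠ 0) (t : ℝ) :
    (c ^ (1 / p) * |t|) ^ p = c * |t| ^ p := by
  rw [Real.mul_rpow (Real.rpow_nonneg hc _) (abs_nonneg t), one_div, Real.rpow_inv_rpow hc hp]

lemma abs_wmean_mul_le_wnorm_mul_wnorm (hw : ∀ a, 0 ≤ w a) (hpq : p.HolderConjugate q)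
    (f g : α → ℝ) :
    |wmean w fun a ↦ f a * g a| ≤ wnorm w p f * wnorm w q g := by
  have split_weight (a : α) :
      |w a * (f a * g a)| = (w a ^ (1 / p) * |f a|) * (w a ^ (1 / q) * |g a|) := by
    have hwa : w a ^ (1 / p) * w a ^ (1 / q) = w a := by
      rw [← Real.rpow_add_of_nonneg (hw a) hpq.one_div_nonneg hpq.symm.one_div_nonneg,
        hpq.one_div_add_one_div, div_one, Real.rpow_one]
    rw [abs_mul, abs_mul, abs_of_nonneg (hw a), mul_mul_mul_comm, hwa]
  calc |wmean w fun a ↦ f a * g a|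
      ≤ ∑ a, |w a * (f a * g a)| := abs_sum_le_sum_abs _ _
    _ = ∑ a, (w a ^ (1 / p) * |f a|) * (w a ^ (1 / q) * |g a|) := by simp only [split_weight]
    _ ≤ (∑ a, (w a ^ (1 / p) * |f a|) ^ p) ^ (1 / p) *
          (∑ a, (w a ^ (1 / q) * |g a|) ^ q) ^ (1 / q) :=
        Real.inner_le_Lp_mul_Lq_of_nonneg univ hpq
          (fun a _ ↦ mul_nonneg (Real.rpow_nonneg (hw a) _) (abs_nonneg _))
          (fun a _ ↦ mul_nonneg (Real.rpow_nonneg (hw a) _) (abs_nonneg _))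
    _ = wnorm w p f * wnorm w q g := by
        simp only [wnorm, rpow_one_div_mul_abs_rpow (hw _) hpq.ne_zero,
          rpow_one_div_mul_abs_rpow (hw _) hpq.symm.ne_zero]

lemma wmean_indicator_one (w : α → ℝ) (S : Finset α) :
    wmean w ((S : Set α).indicator 1) = ∑ a ∈ S, w a := by
  classical
  simp [wmean, Set.indicator_apply]

lemma wnorm_indicator_one_sub_wmean (hw : ∀ a, 0 ≤ w a) (hw1 : ∑ a, w a = 1) (S : Finset α)
    (p : ℝ) {m : ℝ} (hm : m = ∑ a ∈ S, w a) :
    wnorm w p (fun a ↦ (S : Set α).indicator 1 a - wmean w ((S : Set α).indicator 1)) =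
      (m ^ p * (1 - m) + m * (1 - m) ^ p) ^ (1 / p) := by
  classical
  rw [wmean_indicator_one, ← hm, wnorm]
  have sum_compl : ∑ a ∈ Sᶜ, w a = 1 - m := by
    rw [hm, ← hw1, ← sum_add_sum_compl S, add_sub_cancel_left]
  have m_nonneg : 0 ≤ m := hm ▸ sum_nonneg fun a _ ↦ hw a
  have one_sub_nonneg : 0 ≤ 1 - m := sum_compl ▸ sum_nonneg fun a _ ↦ hw a
  have sum_on : ∑ a ∈ S, w a * |(S : Set α).indicator 1 a - m| ^ p = m * (1 - m) ^ p := by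
    conv_rhs => rw [hm, sum_mul, ← hm]
    refine sum_congr rfl fun a ha ↦ ?_
    rw [Set.indicator_of_mem (mem_coe.2 ha), Pi.one_apply, abs_of_nonneg one_sub_nonneg]
  have sum_off : ∑ a ∈ Sᶜ, w a * |(S : Set α).indicator 1 a - m| ^ p = m ^ p * (1 - m) := by
    rw [← sum_compl, mul_comm, sum_mul]
    refine sum_congr rfl fun a ha ↦ ?_
    rw [Set.indicator_of_notMem (mt mem_coe.1 (mem_compl.1 ha)), zero_sub, abs_neg,
      abs_of_nonneg m_nonneg]
  rw [← sum_add_sum_compl S, sum_on, sum_off, add_comm]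

end WeightedSums

section JointDistribution

variable {X Y : Type*} [Fintype X] [Fintype Y] {D : X × Y → ℝ}

lemma sum_margX (D : X × Y → ℝ) : ∑ x, margX D x = ∑ z, D z :=
  (Fintype.sum_prod_type D).symm

lemma sum_margY (D : X × Y → ℝ) : ∑ y, margY D y = ∑ z, D z :=
  (Fintype.sum_prod_type_right D).symm

lemma wmean_comp_fst (D : X × Y → ℝ) (f : X → ℝ) :
    wmean D (fun z ↦ f z.1) = wmean (margX D) f := by
  simp only [wmean, margX, Fintype.sum_prod_type, sum_mul]

lemma wmean_comp_snd (D : X × Y → ℝ) (g : Y → ℝ) :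
    wmean D (fun z ↦ g z.2) = wmean (margY D) g := by
  simp only [wmean, margY, Fintype.sum_prod_type_right, sum_mul]

lemma wmean_margX_mul_condOp (hDX : ∀ x, margX D x ≠ 0) (f : X → ℝ) (g : Y → ℝ) :
    wmean (margX D) (fun x ↦ f x * condOp D g x) = wmean D fun z ↦ f z.1 * g z.2 := by
  simp only [wmean, condOp, Fintype.sum_prod_type]
  refine sum_congr rfl fun x _ ↦ ?_
  rw [mul_left_comm, mul_div_cancel₀ _ (hDX x), mul_sum]
  exact sum_congr rfl fun y _ ↦ mul_left_comm _ _ _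

lemma wmean_sub_wmean_mul_sub_wmean (hD1 : ∑ z, D z = 1) (f : X → ℝ) (g : Y → ℝ) :
    wmean D (fun z ↦ (f z.1 - wmean (margX D) f) * (g z.2 - wmean (margY D) g)) =
      wmean D (fun z ↦ f z.1 * g z.2) - wmean (margX D) f * wmean (margY D) g := by
  set a := wmean (margX D) f with ha
  set b := wmean (margY D) g with hb
  calc wmean D (fun z ↦ (f z.1 - a) * (g z.2 - b))
      = wmean D (fun z ↦ f z.1 * g z.2) - wmean D (fun z ↦ f z.1) * b
          - a * wmean D (fun z ↦ g z.2) + a * b * ∑ z, D z := by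
        simp only [wmean, mul_sum, sum_mul, ← sum_sub_distrib, ← sum_add_distrib]
        exact sum_congr rfl fun z _ ↦ by ring
    _ = wmean D (fun z ↦ f z.1 * g z.2) - a * b := by
        rw [wmean_comp_fst, wmean_comp_snd, hD1, ← ha, ← hb]
        ring

lemma wmean_indicator_one_mul_indicator_one (D : X × Y → ℝ) (A : Finset X) (B : Finset Y) :
    wmean D (fun z ↦ (A : Set X).indicator 1 z.1 * (B : Set Y).indicator 1 z.2) =
      ∑ x ∈ A, ∑ y ∈ B, D (x, y) := by
  rw [← sum_product, ← wmean_indicator_one D (A ×ˢ B), coe_product]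
  exact congrArg (wmean D) (funext fun _ ↦ Set.indicator_prod_one.symm)

lemma abs_wmean_mul_sub_le_of_wnorm_condOp_le {p q r : ℝ} (hpq : p.HolderConjugate q)
    (hD1 : ∑ z, D z = 1) (hDX : ∀ x, 0 < margX D x)
    (hT : ∀ g, wnorm (margX D) q (condOp D g) ≤ wnorm (margY D) r g) (f : X → ℝ) (g : Y → ℝ) :
    |wmean D (fun z ↦ f z.1 * g z.2) - wmean (margX D) f * wmean (margY D) g| ≤
      wnorm (margX D) p (fun x ↦ f x - wmean (margX D) f) *
        wnorm (margY D) r (fun y ↦ g y - wmean (margY D) g) := by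
  have hDX_nonneg (x : X) : 0 ≤ margX D x := (hDX x).le
  rw [← wmean_sub_wmean_mul_sub_wmean hD1,
    ← wmean_margX_mul_condOp (fun x ↦ (hDX x).ne') (fun x ↦ f x - wmean (margX D) f)
      (fun y ↦ g y - wmean (margY D) g)]
  exact (abs_wmean_mul_le_wnorm_mul_wnorm hDX_nonneg hpq _ _).trans
    (mul_le_mul_of_nonneg_left (hT _) (wnorm_nonneg hDX_nonneg _))

end JointDistribution

lemma holderConjugate_two_sub {δ : ℝ} (hδ : δ < 1) :
    (2 - δ).HolderConjugate (2 + δ / (1 - δ)) := by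
  rw [Real.holderConjugate_iff_eq_conjExponent (by linarith)]
  have h₁ : 1 - δ ≠ 0 := by linarith
  rw [show 2 - δ - 1 = 1 - δ by ring]
  field_simp
  ring

theorem stmt8_general {X Y : Type*} [Fintype X] [Fintype Y] (D : X × Y → ℝ)
    (hD1 : ∑ z, D z = 1) (hDX : ∀ x, 0 < margX D x) (hDY : ∀ y, 0 ≤ margY D y)
    {δ : ℝ} (hδ : δ < 1) (hD : Hypercontractive D δ) (A : Finset X) (B : Finset Y) {μ ν : ℝ}
    (hμ : μ = ∑ x ∈ A, margX D x) (hν : ν = ∑ y ∈ B, margY D y) :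
    |∑ x ∈ A, ∑ y ∈ B, D (x, y) - μ * ν| ≤
      (μ ^ (2 - δ) * (1 - μ) + μ * (1 - μ) ^ (2 - δ)) ^ (1 / (2 - δ)) *
      (ν ^ (2 - δ) * (1 - ν) + ν * (1 - ν) ^ (2 - δ)) ^ (1 / (2 - δ)) := by
  have correlation_le := abs_wmean_mul_sub_le_of_wnorm_condOp_le (holderConjugate_two_sub hδ)
    hD1 hDX hD ((A : Set X).indicator 1) ((B : Set Y).indicator 1)
  rwa [wnorm_indicator_one_sub_wmean (fun x ↦ (hDX x).le) ((sum_margX D).trans hD1) A _ hμ,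
    wnorm_indicator_one_sub_wmean hDY ((sum_margY D).trans hD1) B _ hν,
    wmean_indicator_one_mul_indicator_one, wmean_indicator_one, wmean_indicator_one,
    ← hμ, ← hν] at correlation_le

theorem stmt8 {X Y : Type*} [Fintype X] [Fintype Y] [Nonempty X] [Nonempty Y]
    (D : X × Y → ℝ) (hD0 : ∀ p, 0 ≤ D p) (hD1 : ∑ p, D p = 1)
    (hDX : ∀ x, 0 < margX D x) (hDY : ∀ y, 0 < margY D y)
    (δ : ℝ) (hδ0 : 0 ≤ δ) (hδ1 : δ < 1) (hhc : Hypercontractive D δ)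
    (A : Finset X) (B : Finset Y) (μ ν : ℝ)
    (hμ : μ = ∑ x ∈ A, margX D x) (hν : ν = ∑ y ∈ B, margY D y) :
    ∑ x ∈ A, ∑ y ∈ B, D (x, y) ≤ μ * ν +
      (μ ^ (2 - δ) * (1 - μ) + μ * (1 - μ) ^ (2 - δ)) ^ (1 / (2 - δ)) *
      (ν ^ (2 - δ) * (1 - ν) + ν * (1 - ν) ^ (2 - δ)) ^ (1 / (2 - δ)) := by
  have deviation_le := stmt8_general D hD1 hDX (fun y ↦ (hDY y).le) hδ1 hhc A B hμ hν
  linarith only [le_of_abs_le deviation_le]
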